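/- arXiv:1911.10499 — 2 statements merged into one kernel-verified Lean document; each statement's English description precedes it below -/
import Mathlib

section
/- Let ε > 0, n ≥ 1, a = b = 2, and let μ be a Borel probability measure on the simplex 𝒫 ⊂ ℝ². Then the randomised response protocol RR_ε with the estimator Φ_RR = Π_RR satisfies MSE^freq_{μ,n}(RR_ε, Φ_RR) = 2e^ε / ( n·(e^ε−1)² ), for every prior μ. -/
open MeasureTheory Matrix Finset Filter Real

noncomputable section

/-- The probability simplex in `ℝ^a`. -/
def simplex (a : ℕ) : Set (Fin a → ℝ) :=
  {p | (∀ x, 0 ≤ p x) ∧ ∑ x, p x = 1}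

/-- Likelihood `L_y(p) = ∏ i, (Qp)_{y i}`. -/
def lik {a b n : ℕ} (Q : Matrix (Fin b) (Fin a) ℝ) (y : Fin n → Fin b)
    (p : Fin a → ℝ) : ℝ :=
  ∏ i, Q.mulVec p (y i)

/-- Mean squared error for distribution estimation. -/
def MSEdistr {a b n : ℕ} (Q : Matrix (Fin b) (Fin a) ℝ) (μ : Measure (Fin a → ℝ))
    (Est : (Fin n → Fin b) → (Fin a → ℝ)) : ℝ :=
  ∑ y : (Fin n → Fin b), ∫ p, (∑ x, (p x - Est y x) ^ 2) * lik Q y p ∂μ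

/-- The posterior-mean estimator for distribution estimation. -/
def PiOpt {a b n : ℕ} (Q : Matrix (Fin b) (Fin a) ℝ) (μ : Measure (Fin a → ℝ))
    (y : Fin n → Fin b) : Fin a → ℝ :=
  fun x => (∫ p, p x * lik Q y p ∂μ) / (∫ p, lik Q y p ∂μ)

/-- Empirical frequency vector of a data vector. -/
def freqVec {a n : ℕ} (xv : Fin n → Fin a) : Fin a → ℝ :=
  fun α => ((Finset.univ.filter fun i => xv i = α).card : ℝ) / n

/-- Joint weight `w(x⃗,y⃗) = ∫ ∏ i, p_{x_i} Q_{y_i|x_i} dμ(p)`. -/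
def wgt {a b n : ℕ} (Q : Matrix (Fin b) (Fin a) ℝ) (μ : Measure (Fin a → ℝ))
    (xv : Fin n → Fin a) (y : Fin n → Fin b) : ℝ :=
  ∫ p, (∏ i, p (xv i) * Q (y i) (xv i)) ∂μ

/-- Mean squared error for frequency estimation. -/
def MSEfreq {a b n : ℕ} (Q : Matrix (Fin b) (Fin a) ℝ) (μ : Measure (Fin a → ℝ))
    (Est : (Fin n → Fin b) → (Fin a → ℝ)) : ℝ :=
  ∑ xv : (Fin n → Fin a), ∑ y : (Fin n → Fin b),
    wgt Q μ xv y * ∑ α, (freqVec xv α - Est y α) ^ 2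

/-- The posterior-mean estimator for frequency estimation. -/
def PhiOpt {a b n : ℕ} (Q : Matrix (Fin b) (Fin a) ℝ) (μ : Measure (Fin a → ℝ))
    (y : Fin n → Fin b) : Fin a → ℝ :=
  fun α => (∑ xv : (Fin n → Fin a), wgt Q μ xv y * freqVec xv α) /
    (∑ xv : (Fin n → Fin a), wgt Q μ xv y)

/-- `P(φ, y⃗) = ∑_{x⃗ : F(x⃗) = φ} w(x⃗, y⃗)`. -/
def Pphi {a b n : ℕ} (Q : Matrix (Fin b) (Fin a) ℝ) (μ : Measure (Fin a → ℝ))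
    (φ : Fin a → ℝ) (y : Fin n → Fin b) : ℝ := by
  classical
  exact ∑ xv ∈ Finset.univ.filter (fun xv : Fin n → Fin a => freqVec xv = φ), wgt Q μ xv y

/-- Conditional Shannon entropy `H_n(F | Y⃗)` (terms with zero probability vanish since
`Real.log 0 = 0`). -/
def HFcond {a b : ℕ} (Q : Matrix (Fin b) (Fin a) ℝ) (μ : Measure (Fin a → ℝ))
    (n : ℕ) : ℝ := by
  classical
  exact -(∑ y : (Fin n → Fin b), ∑ φ ∈ Finset.image (freqVec (a := a) (n := n)) Finset.univ,
      Pphi Q μ φ y * Real.log (Pphi Q μ φ y /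
        ∑ φ' ∈ Finset.image (freqVec (a := a) (n := n)) Finset.univ, Pphi Q μ φ' y))

/-- The set `Δ = {q ∈ ℝ^m : q ≥ 0, ∑ q ≤ 1}`. -/
def stdCorner (m : ℕ) : Set (Fin m → ℝ) :=
  {q | (∀ i, 0 ≤ q i) ∧ ∑ i, q i ≤ 1}

/-- The identification `Δ ⊂ ℝ^{a-1} → 𝒫 ⊂ ℝ^a`,
`q ↦ (q_1, …, q_{a-1}, 1 - ∑ q_i)`. -/
def emb (a : ℕ) (q : Fin (a - 1) → ℝ) : Fin a → ℝ :=
  fun x => if h : (x : ℕ) < a - 1 then q ⟨x.1, h⟩ else 1 - ∑ i, q i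

/-- `μ` has density `f` (w.r.t. Lebesgue measure on `Δ`). -/
def IsDensity {a : ℕ} (μ : Measure (Fin a → ℝ)) (f : (Fin (a - 1) → ℝ) → ℝ) : Prop :=
  Measurable f ∧ (∀ q, 0 ≤ f q) ∧ (∫ q in stdCorner (a - 1), f q) = 1 ∧
  ∀ g : (Fin a → ℝ) → ℝ, Measurable g → (∃ C, ∀ p, |g p| ≤ C) →
    (∫ p, g p ∂μ) = ∫ q in stdCorner (a - 1), g (emb a q) * f q

/-- `μ` has continuous density `f`. -/
def IsContDensity {a : ℕ} (μ : Measure (Fin a → ℝ)) (f : (Fin (a - 1) → ℝ) → ℝ) : Prop :=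
  ContinuousOn f (stdCorner (a - 1)) ∧ (∀ q, 0 ≤ f q) ∧
  (∫ q in stdCorner (a - 1), f q) = 1 ∧
  ∀ g : (Fin a → ℝ) → ℝ, Measurable g → (∃ C, ∀ p, |g p| ≤ C) →
    (∫ p, g p ∂μ) = ∫ q in stdCorner (a - 1), g (emb a q) * f q

/-- Normalisation constant `C_{y⃗} = ∫_Δ f(q) L_{y⃗}(p(q)) dλ(q)`. -/
def Cw {a b n : ℕ} (Q : Matrix (Fin b) (Fin a) ℝ) (f : (Fin (a - 1) → ℝ) → ℝ)
    (y : Fin n → Fin b) : ℝ :=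
  ∫ q in stdCorner (a - 1), f q * lik Q y (emb a q)

/-- Posterior density `g_{y⃗}(q) = f(q) L_{y⃗}(p(q)) / C_{y⃗}`. -/
def gpost {a b n : ℕ} (Q : Matrix (Fin b) (Fin a) ℝ) (f : (Fin (a - 1) → ℝ) → ℝ)
    (y : Fin n → Fin b) (q : Fin (a - 1) → ℝ) : ℝ :=
  f q * lik Q y (emb a q) / Cw Q f y

/-- Conditional differential entropy `h_n(P | Y⃗)`. -/
def hCond {a b : ℕ} (Q : Matrix (Fin b) (Fin a) ℝ) (f : (Fin (a - 1) → ℝ) → ℝ)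
    (n : ℕ) : ℝ :=
  ∑ y : (Fin n → Fin b),
    Cw Q f y * (-(∫ q in stdCorner (a - 1), gpost Q f y q * Real.log (gpost Q f y q)))

/-- The matrix `D_p = Qᵀ · diag(Qp)⁻¹ · Q`. -/
def Dmat {a b : ℕ} (Q : Matrix (Fin b) (Fin a) ℝ) (p : Fin a → ℝ) :
    Matrix (Fin a) (Fin a) ℝ :=
  Qᵀ * Matrix.diagonal (fun y => (Q.mulVec p y)⁻¹) * Q

/-- The constant `γ_μ(Q)`. -/
def gammaMu {a b : ℕ} (Q : Matrix (Fin b) (Fin a) ℝ) (μ : Measure (Fin a → ℝ)) : ℝ :=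
  (((a : ℝ) - 1) / 2) * Real.log (2 * π * Real.exp 1) -
    (1 / 2) * ∫ p, Real.log (Dmat Q p).det ∂μ

/-- The truncated column `w_x = (Q_{1|x}, …, Q_{b-1|x})`. -/
def wcol {a b : ℕ} (Q : Matrix (Fin b) (Fin a) ℝ) (x : Fin a) : Fin (b - 1) → ℝ :=
  fun y => Q ⟨y.1, lt_of_lt_of_le y.2 (Nat.sub_le b 1)⟩ x

/-- The matrix `E_x = diag(w_x) - w_x w_xᵀ`. -/
def Emat {a b : ℕ} (Q : Matrix (Fin b) (Fin a) ℝ) (x : Fin a) :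
    Matrix (Fin (b - 1)) (Fin (b - 1)) ℝ :=
  Matrix.diagonal (wcol Q x) - Matrix.vecMulVec (wcol Q x) (wcol Q x)

/-- The matrix `G_p = ∑ x, p_x E_x`. -/
def Gmat {a b : ℕ} (Q : Matrix (Fin b) (Fin a) ℝ) (p : Fin a → ℝ) :
    Matrix (Fin (b - 1)) (Fin (b - 1)) ℝ :=
  ∑ x, p x • Emat Q x

/-- The constant `δ_μ(Q)`. -/
def deltaMu {a b : ℕ} (Q : Matrix (Fin b) (Fin a) ℝ) (μ : Measure (Fin a → ℝ)) : ℝ :=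
  gammaMu Q μ +
    (1 / 2) * ∫ p, (Real.log (Gmat Q p).det - ∑ y, Real.log (Q.mulVec p y)) ∂μ

/-- `Q` satisfies `ε`-local differential privacy. -/
def SatisfiesLDP {a b : ℕ} (Q : Matrix (Fin b) (Fin a) ℝ) (ε : ℝ) : Prop :=
  ∀ x x' : Fin a, ∀ y : Fin b, Q y x' ≤ Real.exp ε * Q y x

/-- The randomised response protocol `RR_ε` for `a = b = 2`. -/
def RRmat (ε : ℝ) : Matrix (Fin 2) (Fin 2) ℝ :=
  Matrix.of fun y x =>
    if y = x then Real.exp ε / (Real.exp ε + 1) else 1 / (Real.exp ε + 1)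

/-- The tally `s_x(y⃗) = #{i : y_i = x}` as a real number. -/
def sTally {n : ℕ} (y : Fin n → Fin 2) (x : Fin 2) : ℝ :=
  ((Finset.univ.filter fun i => y i = x).card : ℝ)

/-- The unbiased randomised-response estimator `Π_RR = Φ_RR`. -/
def PiRR (ε : ℝ) {n : ℕ} (y : Fin n → Fin 2) : Fin 2 → ℝ :=
  fun x => ((Real.exp ε + 1) * sTally y x - n) / (n * (Real.exp ε - 1))

/-!
Estimate the frequencies by inverting the protocol: if `G * Q = 1`, use `G *ᵥ freqVec y`. For each
`α` the error is the average over `i` of `1{x_i = α} - G_{α, y_i}`. Under a fixed `p` the pairs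
`(x_i, y_i)` are independent, and `G * Q = 1` makes each of these terms centred, so their variances
add. For randomised response the estimator `PiRR` is of this form, and the variance of a single term
is `e^ε / (e^ε - 1)²` whatever the values of `x_i` and `α`, so the prior does not matter.
-/

section ProductWeights

variable {ι R : Type*} [Fintype ι] [DecidableEq ι] {β : ι → Type*} [∀ i, Fintype (β i)]
  [CommSemiring R] {q : ∀ i, β i → R}

lemma sum_prod_mul_prod_eq_prod_sum (hq : ∀ i, ∑ b, q i b = 1) (s : Finset ι)
    (f : ∀ i, β i → R) :
    ∑ y : ∀ i, β i, (∏ i, q i (y i)) * ∏ i ∈ s, f i (y i) = ∏ i ∈ s, ∑ b, q i b * f i b := by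
  calc ∑ y : ∀ i, β i, (∏ i, q i (y i)) * ∏ i ∈ s, f i (y i)
      = ∑ y : ∀ i, β i, ∏ i, q i (y i) * if i ∈ s then f i (y i) else 1 := by
        simp only [prod_mul_distrib, prod_ite_mem, univ_inter]
    _ = ∏ i, ∑ b, q i b * if i ∈ s then f i b else 1 :=
        (Fintype.prod_sum fun i b => q i b * if i ∈ s then f i b else 1).symm
    _ = ∏ i, if i ∈ s then ∑ b, q i b * f i b else 1 :=
        prod_congr rfl fun i _ => by split_ifs <;> simp [hq]
    _ = ∏ i ∈ s, ∑ b, q i b * f i b := by simp [prod_ite_mem]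

/-- Bienaymé's identity for the product of the weights `q i`. -/
lemma sum_prod_mul_sum_sq_of_centred (hq : ∀ i, ∑ b, q i b = 1) {d : ∀ i, β i → R}
    (hd : ∀ i, ∑ b, q i b * d i b = 0) :
    ∑ y : ∀ i, β i, (∏ i, q i (y i)) * (∑ i, d i (y i)) ^ 2 = ∑ i, ∑ b, q i b * d i b ^ 2 := by
  have diagonal (i : ι) : ∑ y : ∀ i, β i, (∏ k, q k (y k)) * (d i (y i) * d i (y i)) =
      ∑ b, q i b * d i b ^ 2 := by
    simpa [← sq] using sum_prod_mul_prod_eq_prod_sum hq {i} fun k b => d k b ^ 2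
  have off_diagonal (i j : ι) (hij : j ≠ i) :
      ∑ y : ∀ i, β i, (∏ k, q k (y k)) * (d i (y i) * d j (y j)) = 0 := by
    simpa [prod_pair hij.symm, hd] using sum_prod_mul_prod_eq_prod_sum hq {i, j} d
  calc ∑ y : ∀ i, β i, (∏ i, q i (y i)) * (∑ i, d i (y i)) ^ 2
      = ∑ i, ∑ j, ∑ y : ∀ i, β i, (∏ k, q k (y k)) * (d i (y i) * d j (y j)) := by
        simp_rw [sq, sum_mul_sum, mul_sum]
        exact sum_comm.trans (sum_congr rfl fun i _ => sum_comm)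
    _ = ∑ i, ∑ b, q i b * d i b ^ 2 := sum_congr rfl fun i _ => by
        rw [sum_eq_single i (fun j _ => off_diagonal i j) (by simp), diagonal]

end ProductWeights

lemma integrable_of_continuous_of_ae_mem_isCompact {X E : Type*} [TopologicalSpace X]
    [MeasurableSpace X] [OpensMeasurableSpace X] [T2Space X] [NormedAddCommGroup E]
    {μ : Measure X} [IsFiniteMeasureOnCompacts μ] {K : Set X} (hK : IsCompact K)
    (hμ : ∀ᵐ x ∂μ, x ∈ K) {f : X → E} (hf : Continuous f) : Integrable f μ := by
  have hfK : IntegrableOn f K μ := hf.continuousOn.integrableOn_compact hK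
  rwa [IntegrableOn, Measure.restrict_eq_self_of_ae_mem hμ] at hfK

section LinearInversion

variable {a b n : ℕ} {Q : Matrix (Fin b) (Fin a) ℝ} {G : Matrix (Fin a) (Fin b) ℝ}

lemma mulVec_freqVec {m : ℕ} (M : Matrix (Fin m) (Fin a) ℝ) (x : Fin n → Fin a) (α : Fin m) :
    (M *ᵥ freqVec x) α = (∑ i, M α (x i)) / n := by
  rw [← sum_fiberwise' univ x (M α)]
  simp only [mulVec, dotProduct, freqVec, mul_div_assoc', ← sum_div, sum_const, nsmul_eq_mul,
    mul_comm]

/-- The variance, over the responses `y` to the datum `x`, of the term `1{x = α} - G_{α, y}` in the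
error of the estimator `G *ᵥ freqVec y`. It is written as a second moment, which is the variance
when `G * Q = 1` because the term is then centred. -/
def inversionVar (Q : Matrix (Fin b) (Fin a) ℝ) (G : Matrix (Fin a) (Fin b) ℝ) (x α : Fin a) : ℝ :=
  ∑ y, Q y x * ((1 : Matrix (Fin a) (Fin a) ℝ) α x - G α y) ^ 2

lemma sum_mul_one_apply_sub_eq_zero (hQ : ∀ x, ∑ y, Q y x = 1) (hG : G * Q = 1) (x α : Fin a) :
    ∑ y, Q y x * ((1 : Matrix (Fin a) (Fin a) ℝ) α x - G α y) = 0 := by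
  have hGQ : ∑ y, Q y x * G α y = (1 : Matrix (Fin a) (Fin a) ℝ) α x := by
    simp only [← hG, mul_apply, mul_comm]
  simp only [mul_sub, sum_sub_distrib, ← sum_mul, hQ, hGQ, one_mul, sub_self]

lemma sum_sum_prod_mul_sq_freqVec_sub (hQ : ∀ x, ∑ y, Q y x = 1) (hG : G * Q = 1)
    {p : Fin a → ℝ} (hp : ∑ x, p x = 1) (α : Fin a) :
    ∑ x : Fin n → Fin a, ∑ y : Fin n → Fin b,
        (∏ i, p (x i) * Q (y i) (x i)) * (freqVec x α - (G *ᵥ freqVec y) α) ^ 2 =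
      (∑ x, p x * inversionVar Q G x α) / n := by
  let q : Fin n → Fin a × Fin b → ℝ := fun _ z => p z.1 * Q z.2 z.1
  let d : Fin n → Fin a × Fin b → ℝ :=
    fun _ z => (1 : Matrix (Fin a) (Fin a) ℝ) α z.1 - G α z.2
  have error_eq (x : Fin n → Fin a) (y : Fin n → Fin b) :
      freqVec x α - (G *ᵥ freqVec y) α = (∑ i, d i (x i, y i)) / n := by
    rw [sum_sub_distrib, sub_div, ← mulVec_freqVec, ← mulVec_freqVec, one_mulVec]
  have mass (i : Fin n) : ∑ z, q i z = 1 := by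
    simp only [q, Fintype.sum_prod_type, ← mul_sum, hQ, mul_one, hp]
  have mean (i : Fin n) : ∑ z, q i z * d i z = 0 := by
    simp only [q, d, Fintype.sum_prod_type, mul_assoc, ← mul_sum,
      sum_mul_one_apply_sub_eq_zero hQ hG, mul_zero, sum_const_zero]
  have second_moment (i : Fin n) :
      ∑ z, q i z * d i z ^ 2 = ∑ x, p x * inversionVar Q G x α := by
    simp only [q, d, Fintype.sum_prod_type, mul_assoc, ← mul_sum, inversionVar]
  calc ∑ x : Fin n → Fin a, ∑ y : Fin n → Fin b,
        (∏ i, p (x i) * Q (y i) (x i)) * (freqVec x α - (G *ᵥ freqVec y) α) ^ 2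
      = (∑ z : Fin n → Fin a × Fin b,
          (∏ i, q i (z i)) * (∑ i, d i (z i)) ^ 2) / n ^ 2 := by
        simp only [error_eq, div_pow, mul_div_assoc', ← sum_div]
        rw [← Fintype.sum_prod_type', ← (Equiv.arrowProdEquivProdArrow _ _ _).sum_comp]
        rfl
    _ = n * (∑ x, p x * inversionVar Q G x α) / n ^ 2 := by
        rw [sum_prod_mul_sum_sq_of_centred mass mean]
        simp only [second_moment, sum_const, card_univ, Fintype.card_fin, nsmul_eq_mul]
    _ = (∑ x, p x * inversionVar Q G x α) / n := by field_simp

lemma MSEfreq_eq_integral {μ : Measure (Fin a → ℝ)} [IsFiniteMeasure μ]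
    (hμ : ∀ᵐ p ∂μ, p ∈ simplex a) (Est : (Fin n → Fin b) → Fin a → ℝ) :
    MSEfreq Q μ Est = ∫ p, ∑ α, ∑ x : Fin n → Fin a, ∑ y : Fin n → Fin b,
      (∏ i, p (x i) * Q (y i) (x i)) * (freqVec x α - Est y α) ^ 2 ∂μ := by
  have integrable {f : (Fin a → ℝ) → ℝ} (hf : Continuous f) : Integrable f μ :=
    integrable_of_continuous_of_ae_mem_isCompact (isCompact_stdSimplex ℝ (Fin a)) hμ hf
  calc MSEfreq Q μ Est
      = ∑ α, ∑ x : Fin n → Fin a, ∑ y : Fin n → Fin b,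
          wgt Q μ x y * (freqVec x α - Est y α) ^ 2 := by
        simp only [MSEfreq, mul_sum]
        exact (sum_congr rfl fun x _ => sum_comm).trans sum_comm
    _ = ∑ α, ∑ x : Fin n → Fin a, ∑ y : Fin n → Fin b,
          ∫ p, (∏ i, p (x i) * Q (y i) (x i)) * (freqVec x α - Est y α) ^ 2 ∂μ := by
        simp only [wgt, integral_mul_const]
    _ = ∫ p, ∑ α, ∑ x : Fin n → Fin a, ∑ y : Fin n → Fin b,
          (∏ i, p (x i) * Q (y i) (x i)) * (freqVec x α - Est y α) ^ 2 ∂μ := by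
        rw [integral_finsetSum _ fun α _ => integrable (by fun_prop)]
        refine sum_congr rfl fun α _ => ?_
        rw [integral_finsetSum _ fun x _ => integrable (by fun_prop)]
        exact sum_congr rfl fun x _ =>
          (integral_finsetSum _ fun y _ => integrable (by fun_prop)).symm

theorem MSEfreq_mulVec_freqVec (hQ : ∀ x, ∑ y, Q y x = 1) (hG : G * Q = 1)
    {μ : Measure (Fin a → ℝ)} [IsFiniteMeasure μ] (hμ : ∀ᵐ p ∂μ, p ∈ simplex a) :
    MSEfreq (n := n) Q μ (fun y => G *ᵥ freqVec y) =
      (∫ p, ∑ α, ∑ x, p x * inversionVar Q G x α ∂μ) / n := by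
  rw [MSEfreq_eq_integral hμ, ← integral_div]
  refine integral_congr_ae (hμ.mono fun p hp => ?_)
  simp only [sum_sum_prod_mul_sq_freqVec_sub hQ hG hp.2, ← sum_div]

end LinearInversion

section RandomisedResponse

variable {ε : ℝ}

/-- The inverse of the randomised response matrix `RRmat ε`, which turns response frequencies into
the estimates `PiRR ε`. At `ε = 0`, where `RRmat ε` is singular, all its entries are `0`. -/
def RRinv (ε : ℝ) : Matrix (Fin 2) (Fin 2) ℝ :=
  Matrix.of fun x y => ((exp ε + 1) * (if y = x then 1 else 0) - 1) / (exp ε - 1)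

lemma PiRR_eq_RRinv_mulVec_freqVec (ε : ℝ) {n : ℕ} (y : Fin n → Fin 2) :
    PiRR ε y = RRinv ε *ᵥ freqVec y := by
  ext x
  rw [mulVec_freqVec]
  simp only [PiRR, RRinv, of_apply, sTally, ← sum_div, sum_sub_distrib, ← mul_sum, sum_boole,
    sum_const, card_univ, Fintype.card_fin, nsmul_eq_mul, one_mul, div_div,
    mul_comm (n : ℝ)]

lemma sum_RRmat (ε : ℝ) (x : Fin 2) : ∑ y, RRmat ε y x = 1 := by
  revert x
  simp only [RRmat, of_apply, Fin.forall_fin_two, Fin.sum_univ_two, zero_ne_one, one_ne_zero,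
    ↓reduceIte]
  constructor <;> field_simp
  ring

lemma exp_sub_one_ne_zero (hε : ε ≠ 0) : exp ε - 1 ≠ 0 :=
  sub_ne_zero.2 (mt (exp_eq_one_iff ε).1 hε)

lemma RRinv_mul_RRmat (hε : ε ≠ 0) : RRinv ε * RRmat ε = 1 := by
  have := exp_sub_one_ne_zero hε
  simp only [← Matrix.ext_iff, mul_apply, RRinv, RRmat, of_apply, one_apply, Fin.forall_fin_two,
    Fin.sum_univ_two, zero_ne_one, one_ne_zero, ↓reduceIte]
  and_intros <;> field_simp <;> ring

lemma inversionVar_RR (hε : ε ≠ 0) (x α : Fin 2) :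
    inversionVar (RRmat ε) (RRinv ε) x α = exp ε / (exp ε - 1) ^ 2 := by
  have := exp_sub_one_ne_zero hε
  revert x α
  simp only [inversionVar, RRinv, RRmat, of_apply, one_apply, Fin.forall_fin_two,
    Fin.sum_univ_two, zero_ne_one, one_ne_zero, ↓reduceIte]
  and_intros <;> field_simp <;> ring

end RandomisedResponse

/-- exact frequency-estimation MSE of randomised response,
independent of the prior `μ`. -/
theorem MSEfreq_RR (ε : ℝ) (hε : 0 < ε) {n : ℕ} (hn : 1 ≤ n)
    (μ : Measure (Fin 2 → ℝ)) [IsProbabilityMeasure μ]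
    (hμsupp : μ (simplex 2)ᶜ = 0) :
    MSEfreq (n := n) (RRmat ε) μ (PiRR ε) =
      2 * Real.exp ε / ((n : ℝ) * (Real.exp ε - 1) ^ 2) := by
  have hμ : ∀ᵐ p ∂μ, p ∈ simplex 2 := hμsupp
  have total_variance : ∀ᵐ p ∂μ, ∑ α, ∑ x, p x * inversionVar (RRmat ε) (RRinv ε) x α =
      2 * exp ε / (exp ε - 1) ^ 2 := by
    filter_upwards [hμ] with p hp
    simp only [inversionVar_RR hε.ne', ← sum_mul, hp.2, one_mul, Fin.sum_univ_two]
    ring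
  calc MSEfreq (n := n) (RRmat ε) μ (PiRR ε)
      = MSEfreq (n := n) (RRmat ε) μ (fun y => RRinv ε *ᵥ freqVec y) := by
        rw [funext (PiRR_eq_RRinv_mulVec_freqVec ε)]
    _ = (∫ p, ∑ α, ∑ x, p x * inversionVar (RRmat ε) (RRinv ε) x α ∂μ) / n :=
        MSEfreq_mulVec_freqVec (sum_RRmat ε) (RRinv_mul_RRmat hε.ne') hμ
    _ = 2 * exp ε / (exp ε - 1) ^ 2 / n := by
        rw [integral_congr_ae total_variance, integral_const, probReal_univ, one_smul]
    _ = 2 * exp ε / (n * (exp ε - 1) ^ 2) := by rw [div_div, mul_comm (n : ℝ)]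

end
end

section
/- Let ε > 0 and let Q be a privacy protocol satisfying ε-LDP, all of whose entries are positive and whose rank is a, and let μ be a Borel probability measure on the simplex 𝒫 having a continuous density, with p ↦ log det D_p μ-integrable. Then liminf_{n→∞} n · MSE^distr_{μ,n}(Q,Π_opt,n) ≥ a / (e^ε − 1)². -/
/-!
The squared-error risk is bounded from below by the van Trees (Bayesian Cramér–Rao) inequality,
applied to each coordinate `p x` of the unknown distribution in the direction `e_x - 1/a` of the
tangent space of the simplex. The continuous prior density is first replaced by a `C¹` minorant
`h ^ 2` that vanishes off the simplex: this only decreases the risk, and its mass can be made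
arbitrarily close to `1`. Combining the coordinates by the Cauchy–Schwarz inequality, the risk after
`n` observations is at least `(a - 1) ^ 2 / (J + n * T)`, up to that mass, where `J` does not depend
on `n` and `T` bounds the trace of the Fisher information of one observation. Under `ε`-LDP the
entries of a row of `Q` with minimum `m` lie in `[m, e^ε * m]`, so Popoviciu's inequality for their
variance, summed over the rows, allows `T = a * (e^ε - 1) ^ 2 / 4`.

A `liminf` in `ℝ` has a junk value when the sequence tends to `+∞`. The bound is therefore obtained
in `EReal`, for arbitrary estimators. For the posterior mean `n * MSE` is bounded, because `Q` has a
left inverse, which gives an unbiased linear estimator whose risk is `O(1/n)`.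
-/

open MeasureTheory Matrix Finset Filter Real

noncomputable section

/-! ### Independent observations -/

section IndependentObservations

variable {ι : Type*} [Fintype ι] {r s : ι → ℝ}

lemma sum_prod_eq_one (hr : ∑ y, r y = 1) (n : ℕ) : ∑ y : Fin n → ι, ∏ i, r (y i) = 1 := by
  rw [← Fintype.sum_pow, hr, one_pow]

lemma sum_prod_mul_add_sum_sq (hr : ∑ y, r y = 1) (hrs : ∑ y, r y * s y = 0) (n : ℕ) (c : ℝ) :
    ∑ y : Fin n → ι, (∏ i, r (y i)) * (c + ∑ i, s (y i)) ^ 2 =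
      c ^ 2 + n * ∑ y, r y * s y ^ 2 := by
  induction n generalizing c with
  | zero => simp
  | succ n ih =>
    set V := ∑ y, r y * s y ^ 2
    have condition_on_first (z : ι) : ∑ y : Fin n → ι,
        (∏ i, r (Fin.consEquiv (fun _ => ι) (z, y) i)) *
          (c + ∑ i, s (Fin.consEquiv (fun _ => ι) (z, y) i)) ^ 2 =
        r z * (c ^ 2 + n * V) + 2 * c * (r z * s z) + r z * s z ^ 2 := by
      calc _ = r z * ∑ y : Fin n → ι, (∏ i, r (y i)) * (c + s z + ∑ i, s (y i)) ^ 2 := by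
            rw [mul_sum]
            refine sum_congr rfl fun y _ => ?_
            simp only [Fin.consEquiv_apply, Fin.prod_univ_succ, Fin.sum_univ_succ, Fin.cons_zero,
              Fin.cons_succ]
            ring
        _ = _ := by rw [ih]; ring
    rw [← (Fin.consEquiv fun _ : Fin (n + 1) => ι).sum_comp, Fintype.sum_prod_type]
    simp only [condition_on_first, sum_add_distrib, ← sum_mul, ← mul_sum, hr, hrs]
    push_cast
    ring

lemma sum_prod_mul_sampleMean_sub_sq (hr : ∑ y, r y = 1) {θ : ℝ} (hθ : ∑ y, r y * s y = θ)
    {n : ℕ} (hn : n ≠ 0) :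
    ∑ y : Fin n → ι, (∏ i, r (y i)) * ((∑ i, s (y i)) / n - θ) ^ 2 =
      (∑ y, r y * (s y - θ) ^ 2) / n := by
  have hn' : (n : ℝ) ≠ 0 := Nat.cast_ne_zero.2 hn
  have centred : ∑ y, r y * (s y - θ) = 0 := by
    simp only [mul_sub, sum_sub_distrib, ← sum_mul, hr, hθ, one_mul, sub_self]
  have rescale (y : Fin n → ι) : (∏ i, r (y i)) * ((∑ i, s (y i)) / n - θ) ^ 2 =
      (∏ i, r (y i)) * (0 + ∑ i, (s (y i) - θ)) ^ 2 / n ^ 2 := by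
    simp only [sum_sub_distrib, sum_const, card_univ, Fintype.card_fin, nsmul_eq_mul]
    field_simp
    ring
  simp only [rescale, ← sum_div, sum_prod_mul_add_sum_sq hr centred]
  field_simp
  ring

end IndependentObservations

/-! ### Fisher information of models with finitely many outcomes -/

lemma fderiv_prod_eq_prod_mul_sum_div {E κ : Type*} [NormedAddCommGroup E] [NormedSpace ℝ E]
    [Fintype κ] {g : κ → E → ℝ} {q : E} (hg : ∀ i, DifferentiableAt ℝ (g i) q)
    (hne : ∀ i, g i q ≠ 0) (d : E) :
    fderiv ℝ (fun q => ∏ i, g i q) q d = (∏ i, g i q) * ∑ i, fderiv ℝ (g i) q d / g i q := by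
  classical
  rw [fderiv_finsetProd fun i _ => hg i, mul_sum]
  simp only [_root_.sum_apply, _root_.smul_apply, smul_eq_mul]
  refine sum_congr rfl fun i _ => ?_
  rw [← mul_prod_erase univ _ (mem_univ i)]
  field_simp [hne i]

section FisherInfo

variable {E ι : Type*} [NormedAddCommGroup E] [NormedSpace ℝ E] [Fintype ι]
  {ℓ : ι → E → ℝ} {q : E}

/-- The Fisher information at the parameter `q`, in the direction `d`, of a statistical model with
finitely many outcomes, where `ℓ y q` is the probability of the outcome `y` under `q`. -/
def fisherInfo (ℓ : ι → E → ℝ) (q d : E) : ℝ :=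
  ∑ y, fderiv ℝ (ℓ y) q d ^ 2 / ℓ y q

lemma fisherInfo_nonneg (hℓ : ∀ y, 0 ≤ ℓ y q) (d : E) : 0 ≤ fisherInfo ℓ q d :=
  sum_nonneg fun y _ => div_nonneg (sq_nonneg _) (hℓ y)

lemma sum_fderiv_eq_zero (hℓ : ∀ y, DifferentiableAt ℝ (ℓ y) q) (hsum : ∀ q, ∑ y, ℓ y q = 1)
    (d : E) : ∑ y, fderiv ℝ (ℓ y) q d = 0 := by
  have h := congrArg (· d) (fderiv_fun_sum (u := univ) fun y _ => hℓ y)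
  simpa [hsum] using h.symm

lemma fisherInfo_prod (hℓ : ∀ y, DifferentiableAt ℝ (ℓ y) q) (hne : ∀ y, ℓ y q ≠ 0)
    (hsum : ∀ q, ∑ y, ℓ y q = 1) (n : ℕ) (d : E) :
    fisherInfo (fun (y : Fin n → ι) q => ∏ i, ℓ (y i) q) q d = n * fisherInfo ℓ q d := by
  have score_centred : ∑ y, ℓ y q * (fderiv ℝ (ℓ y) q d / ℓ y q) = 0 := by
    simp only [mul_div_cancel₀ _ (hne _), sum_fderiv_eq_zero hℓ hsum]
  calc fisherInfo (fun (y : Fin n → ι) q => ∏ i, ℓ (y i) q) q d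
      = ∑ y : Fin n → ι,
          (∏ i, ℓ (y i) q) * (0 + ∑ i, fderiv ℝ (ℓ (y i)) q d / ℓ (y i) q) ^ 2 := by
        refine sum_congr rfl fun y _ => ?_
        rw [fderiv_prod_eq_prod_mul_sum_div (fun i => hℓ (y i)) fun i => hne (y i), zero_add]
        field_simp [prod_ne_zero_iff.2 fun i (_ : i ∈ univ) => hne (y i)]
    _ = n * ∑ y, ℓ y q * (fderiv ℝ (ℓ y) q d / ℓ y q) ^ 2 := by
        rw [sum_prod_mul_add_sum_sq (hsum q) score_centred]
        ring
    _ = n * fisherInfo ℓ q d := by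
        congr 1
        refine sum_congr rfl fun y _ => ?_
        field_simp [hne y]

lemma continuousOn_fisherInfo {K : Set E} (hℓ : ∀ y, ContDiff ℝ 1 (ℓ y))
    (hne : ∀ y, ∀ q ∈ K, ℓ y q ≠ 0) (d : E) : ContinuousOn (fun q => fisherInfo ℓ q d) K :=
  continuousOn_finsetSum _ fun y _ =>
    ((((hℓ y).continuous_fderiv one_ne_zero).clm_apply continuous_const).pow 2).continuousOn.div
      (hℓ y).continuous.continuousOn (hne y)

end FisherInfo

/-! ### The van Trees inequality -/

lemma sq_integral_le_mul_of_quadratic_nonneg {α : Type*} [MeasurableSpace α] {ν : Measure α}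
    {A B C : α → ℝ} (hA : Integrable A ν) (hB : Integrable B ν) (hC : Integrable C ν)
    (hquad : ∀ c, ∀ᵐ x ∂ν, 0 ≤ A x * (c * c) + 2 * B x * c + C x) :
    (∫ x, B x ∂ν) ^ 2 ≤ (∫ x, A x ∂ν) * ∫ x, C x ∂ν := by
  have integral_quadratic_nonneg (c : ℝ) :
      0 ≤ (∫ x, A x ∂ν) * (c * c) + 2 * (∫ x, B x ∂ν) * c + ∫ x, C x ∂ν := by
    calc 0 ≤ ∫ x, (A x * (c * c) + 2 * B x * c + C x) ∂ν := integral_nonneg_of_ae (hquad c)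
      _ = _ := by
        have hAc : Integrable (fun x => A x * (c * c)) ν := hA.mul_const _
        have hBc : Integrable (fun x => 2 * B x * c) ν := (hB.const_mul 2).mul_const c
        rw [integral_add (by exact hAc.add hBc) hC, integral_add hAc hBc, integral_mul_const,
          integral_mul_const, integral_const_mul]
  have := discrim_le_zero integral_quadratic_nonneg
  rw [discrim] at this
  linarith

-- The right-hand side is the `r`-mean of `(c * η * e + 2 * D + η * (g / r)) ^ 2`.
lemma quadratic_error_add_score_nonneg {ι : Type*} [Fintype ι] {r g : ι → ℝ} (hr : ∀ y, 0 < r y)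
    (hr1 : ∑ y, r y = 1) (hg : ∑ y, g y = 0) (e : ι → ℝ) (η D c : ℝ) :
    0 ≤ (η ^ 2 * ∑ y, e y ^ 2 * r y) * (c * c) +
      2 * (η ^ 2 * ∑ y, e y * g y + 2 * η * D * ∑ y, e y * r y) * c +
      (4 * D ^ 2 + η ^ 2 * ∑ y, g y ^ 2 / r y) := by
  have expand (y : ι) : r y * (c * η * e y + 2 * D + η * (g y / r y)) ^ 2 =
      η ^ 2 * c * c * (e y ^ 2 * r y) + 2 * η ^ 2 * c * (e y * g y) +
        4 * η * D * c * (e y * r y) + 4 * D ^ 2 * r y + η ^ 2 * (g y ^ 2 / r y) +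
        4 * D * η * g y := by
    field_simp [(hr y).ne']
    ring
  have mean_nonneg : 0 ≤ ∑ y, r y * (c * η * e y + 2 * D + η * (g y / r y)) ^ 2 :=
    sum_nonneg fun y _ => mul_nonneg (hr y).le (sq_nonneg _)
  simp only [expand, sum_add_distrib, ← mul_sum, hr1, hg] at mean_nonneg
  linarith

lemma fderiv_sum_sub_mul {E ι : Type*} [NormedAddCommGroup E] [NormedSpace ℝ E] [Fintype ι]
    {ℓ : ι → E → ℝ} {θ : E → ℝ} {q : E} (hℓ : ∀ y, DifferentiableAt ℝ (ℓ y) q)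
    (hsum : ∑ y, ℓ y q = 1) (hθ : DifferentiableAt ℝ θ q) (t : ι → ℝ) (d : E) :
    fderiv ℝ (fun q => ∑ y, (θ q - t y) * ℓ y q) q d =
      fderiv ℝ θ q d + ∑ y, (θ q - t y) * fderiv ℝ (ℓ y) q d := by
  rw [fderiv_fun_sum fun y _ => (hθ.sub_const _).fun_mul (hℓ y)]
  simp only [fderiv_fun_mul (hθ.sub_const _) (hℓ _), fderiv_sub_const, sum_add_distrib,
    _root_.add_apply, _root_.sum_apply, _root_.smul_apply,
    smul_eq_mul, ← sum_mul, hsum, one_mul]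
  ring

section VanTrees

variable {E ι : Type*} [NormedAddCommGroup E] [NormedSpace ℝ E] [FiniteDimensional ℝ E]
  [MeasurableSpace E] [BorelSpace E] [Fintype ι] {K : Set E} {h : E → ℝ}

lemma setIntegral_fderiv_sq_mul_eq_zero (ν : Measure E) [ν.IsAddHaarMeasure] (hK : IsCompact K)
    (hh : ContDiff ℝ 1 h) (hz : ∀ q ∉ K, h q = 0) {W : E → ℝ} (hW : ContDiff ℝ 1 W) (d : E) :
    ∫ q in K, (h q ^ 2 * fderiv ℝ W q d + 2 * h q * fderiv ℝ h q d * W q) ∂ν = 0 := by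
  have integrable_of_eq {g : E → ℝ} (hg : Continuous g) (hgz : ∀ q, h q = 0 → g q = 0) :
      Integrable g ν :=
    hg.integrable_of_hasCompactSupport
      (HasCompactSupport.intro hK fun q hq => hgz q (hz q hq))
  have hfd (q : E) : fderiv ℝ (fun q => h q ^ 2) q d = 2 * h q * fderiv ℝ h q d := by
    simp [fderiv_fun_pow 2 (hh.differentiable one_ne_zero q)]
  have i1 := integrable_of_eq (g := fun q => h q ^ 2 * fderiv ℝ W q d) (by fun_prop)
    fun q hq => by simp [hq]
  have i2 := integrable_of_eq (g := fun q => 2 * h q * fderiv ℝ h q d * W q) (by fun_prop)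
    fun q hq => by simp [hq]
  have by_parts := integral_mul_fderiv_eq_neg_fderiv_mul_of_integrable (μ := ν) (v := d)
    (f := fun q => h q ^ 2) (g := W) (by simpa only [hfd] using i2) i1
    (integrable_of_eq (by fun_prop) fun q hq => by simp [hq])
    (fun q _ => (hh.pow 2).differentiable one_ne_zero q)
    (fun q _ => hW.differentiable one_ne_zero q)
  rw [setIntegral_eq_integral_of_forall_compl_eq_zero fun q hq => by simp [hz q hq],
    integral_add i1 i2, by_parts]
  simp [hfd]

lemma setIntegral_sq_mul_error_score_eq_neg (ν : Measure E) [ν.IsAddHaarMeasure] (hK : IsCompact K)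
    (hh : ContDiff ℝ 1 h) (hz : ∀ q ∉ K, h q = 0) {ℓ : ι → E → ℝ}
    (hℓ : ∀ y, ContDiff ℝ 1 (ℓ y)) (hsum : ∀ q, ∑ y, ℓ y q = 1) {θ : E → ℝ}
    (hθ : ContDiff ℝ 1 θ) (t : ι → ℝ) (d : E) :
    ∫ q in K, (h q ^ 2 * ∑ y, (θ q - t y) * fderiv ℝ (ℓ y) q d +
        2 * h q * fderiv ℝ h q d * ∑ y, (θ q - t y) * ℓ y q) ∂ν =
      -∫ q in K, h q ^ 2 * fderiv ℝ θ q d ∂ν := by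
  have hW : ContDiff ℝ 1 fun q => ∑ y, (θ q - t y) * ℓ y q := by fun_prop
  have by_parts := setIntegral_fderiv_sq_mul_eq_zero ν hK hh hz hW d
  simp only [fun q => fderiv_sum_sub_mul (fun y => (hℓ y).differentiable one_ne_zero q) (hsum q)
    (hθ.differentiable one_ne_zero q) t d, mul_add, add_assoc] at by_parts
  have hθc := hθ.continuous
  have hhc := hh.continuous
  have hℓc := fun y => (hℓ y).continuous
  rw [integral_add (ContinuousOn.integrableOn_compact hK (by fun_prop))
    (ContinuousOn.integrableOn_compact hK (by fun_prop))] at by_parts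
  exact eq_neg_of_add_eq_zero_right by_parts

/-- The van Trees inequality for the estimator `t` of `θ q`, with prior density `h ^ 2`. The Fisher
information of this prior in the direction `d` is the integral of `4 * (fderiv ℝ h q d) ^ 2`. -/
theorem van_trees_inequality (ν : Measure E) [ν.IsAddHaarMeasure] (hK : IsCompact K)
    (hh : ContDiff ℝ 1 h) (hz : ∀ q ∉ K, h q = 0) {ℓ : ι → E → ℝ}
    (hℓ : ∀ y, ContDiff ℝ 1 (ℓ y)) (hpos : ∀ y, ∀ q ∈ K, 0 < ℓ y q)
    (hsum : ∀ q, ∑ y, ℓ y q = 1) {θ : E → ℝ} (hθ : ContDiff ℝ 1 θ) (t : ι → ℝ) (d : E) :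
    (∫ q in K, h q ^ 2 * fderiv ℝ θ q d ∂ν) ^ 2 ≤
      (∫ q in K, h q ^ 2 * ∑ y, (θ q - t y) ^ 2 * ℓ y q ∂ν) *
        ∫ q in K, (4 * fderiv ℝ h q d ^ 2 + h q ^ 2 * fisherInfo ℓ q d) ∂ν := by
  have hhc := hh.continuous
  have hθc := hθ.continuous
  have hℓc := fun y => (hℓ y).continuous
  have hI : ContinuousOn (fun q => fisherInfo ℓ q d) K :=
    continuousOn_fisherInfo hℓ (fun y q hq => (hpos y q hq).ne') d
  have integrable {g : E → ℝ} (hg : ContinuousOn g K) : IntegrableOn g K ν :=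
    hg.integrableOn_compact hK
  rw [← neg_sq, ← setIntegral_sq_mul_error_score_eq_neg ν hK hh hz hℓ hsum hθ t d]
  refine sq_integral_le_mul_of_quadratic_nonneg (integrable (by fun_prop))
    (integrable (by fun_prop)) (integrable (by fun_prop)) fun c => ?_
  exact ae_restrict_of_forall_mem hK.measurableSet fun q hq =>
    quadratic_error_add_score_nonneg (fun y => hpos y q hq) (hsum q)
      (sum_fderiv_eq_zero (fun y => (hℓ y).differentiable one_ne_zero q) hsum d)
      (fun y => θ q - t y) (h q) (fderiv ℝ h q d) c

end VanTrees

/-! ### Sums of squared deviations -/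

section Popoviciu

variable {κ : Type*} [Fintype κ]

lemma sum_sq_sub_mean_le_sum_sq_sub (u : κ → ℝ) (c : ℝ) :
    ∑ x, (u x - (∑ z, u z) / Fintype.card κ) ^ 2 ≤ ∑ x, (u x - c) ^ 2 := by
  rcases isEmpty_or_nonempty κ with _ | _
  · simp
  set A := (∑ z, u z) / Fintype.card κ with hA
  have sum_eq : ∑ z, u z = Fintype.card κ * A := by
    rw [hA, mul_div_cancel₀ _ (Nat.cast_ne_zero.2 Fintype.card_ne_zero)]
  have expand (x : κ) :
      (u x - c) ^ 2 = (u x - A) ^ 2 + (2 * (A - c) * u x + (c ^ 2 - A ^ 2)) := by ring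
  have excess : ∑ x, (2 * (A - c) * u x + (c ^ 2 - A ^ 2)) = Fintype.card κ * (A - c) ^ 2 := by
    rw [sum_add_distrib, ← mul_sum, sum_eq, sum_const, card_univ, nsmul_eq_mul]
    ring
  simp only [expand, sum_add_distrib (f := fun x => (u x - A) ^ 2), excess]
  exact le_add_of_nonneg_right (by positivity)

lemma sum_sq_sub_mean_le {u : κ → ℝ} {m M : ℝ} (hm : ∀ x, m ≤ u x) (hM : ∀ x, u x ≤ M) :
    ∑ x, (u x - (∑ z, u z) / Fintype.card κ) ^ 2 ≤ Fintype.card κ * (M - m) ^ 2 / 4 := by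
  have dist_midpoint (x : κ) : (u x - (m + M) / 2) ^ 2 ≤ (M - m) ^ 2 / 4 := by
    nlinarith [mul_nonneg (sub_nonneg.2 (hm x)) (sub_nonneg.2 (hM x))]
  calc _ ≤ ∑ x, (u x - (m + M) / 2) ^ 2 := sum_sq_sub_mean_le_sum_sq_sub u _
    _ ≤ ∑ _x : κ, (M - m) ^ 2 / 4 := sum_le_sum fun x _ => dist_midpoint x
    _ = _ := by rw [sum_const, card_univ, nsmul_eq_mul, mul_div_assoc]

end Popoviciu

/-! ### Smooth minorants -/

section SmoothMinorants

variable {E : Type*} [NormedAddCommGroup E]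

lemma exists_contDiff_abs_le [NormedSpace ℝ E] [FiniteDimensional ℝ E] {F : E → ℝ}
    (hF : Continuous F) (hF0 : ∀ q, 0 ≤ F q) {δ : ℝ} (hδ : 0 < δ) :
    ∃ g : E → ℝ, ContDiff ℝ 1 g ∧ ∀ q, |g q| ≤ F q ∧ F q - δ ≤ g q := by
  obtain ⟨g, hg, hdist, hsupp⟩ := Continuous.exists_contDiff_approx
    (f := fun q => max (F q - δ / 2) 0) (ε := fun _ => δ / 2) 1
    ((hF.sub continuous_const).max continuous_const) continuous_const fun _ => half_pos hδ
  refine ⟨g, hg, fun q => ?_⟩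
  have near := abs_lt.1 (hdist q)
  by_cases hq : F q ≤ δ / 2
  · have : g q = 0 := Function.notMem_support.1 fun h => hsupp h (max_eq_right (by linarith))
    rw [this, abs_zero]
    exact ⟨hF0 q, by linarith⟩
  · rw [max_eq_left (by linarith)] at near
    exact ⟨abs_le.2 ⟨by linarith, by linarith⟩, by linarith⟩

/-- A continuous cutoff of `√f` near the boundary of `K`: it vanishes off `K`, and is eventually
equal to `√f` as `N → ∞` at each interior point of `K`. -/
def sqrtCutoff (K : Set E) (f : E → ℝ) (N : ℕ) (q : E) : ℝ :=
  min √(f q) (N * Metric.infDist q Kᶜ)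

variable {K : Set E} {f : E → ℝ}

lemma sqrtCutoff_nonneg (N : ℕ) (q : E) : 0 ≤ sqrtCutoff K f N q :=
  le_min (Real.sqrt_nonneg _) (mul_nonneg N.cast_nonneg Metric.infDist_nonneg)

lemma sqrtCutoff_eq_zero {q : E} (hq : q ∈ closure Kᶜ) (N : ℕ) : sqrtCutoff K f N q = 0 := by
  simp [sqrtCutoff, Metric.infDist_zero_of_mem_closure hq]

lemma continuous_sqrtCutoff (hK : IsClosed K) (hf : ContinuousOn f K) (N : ℕ) :
    Continuous (sqrtCutoff K f N) := by
  have on_K : ContinuousOn (sqrtCutoff K f N) K :=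
    hf.sqrt.inf (continuous_const.mul (Metric.continuous_infDist_pt _)).continuousOn
  have off_K : ContinuousOn (sqrtCutoff K f N) (closure Kᶜ) :=
    (continuousOn_const (c := (0 : ℝ))).congr fun q hq => sqrtCutoff_eq_zero hq N
  have cover : K ∪ closure Kᶜ = Set.univ :=
    Set.eq_univ_of_univ_subset ((Set.union_compl_self K).symm.subset.trans
      (Set.union_subset_union_right K subset_closure))
  rw [← continuousOn_univ, ← cover]
  exact on_K.union_of_isClosed off_K hK isClosed_closure

lemma eventually_sqrtCutoff_eq (hKc : Kᶜ.Nonempty) {q : E} (hq : q ∈ interior K) :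
    ∀ᶠ N in atTop, sqrtCutoff K f N q = √(f q) := by
  have infDist_pos : 0 < Metric.infDist q Kᶜ := by
    rwa [← Metric.infDist_pos_iff_notMem_closure hKc, ← Set.mem_compl_iff,
      ← interior_eq_compl_closure_compl]
  filter_upwards [((tendsto_natCast_atTop_atTop (R := ℝ)).atTop_mul_const
    infDist_pos).eventually_ge_atTop √(f q)] with N hN
  exact min_eq_left hN

lemma exists_contDiff_sq_le_tendsto_integral [NormedSpace ℝ E] [FiniteDimensional ℝ E]
    [MeasurableSpace E] [BorelSpace E] (ν : Measure E) [IsFiniteMeasureOnCompacts ν]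
    (hK : IsCompact K) (hKc : Kᶜ.Nonempty) (hfrontier : ν (frontier K) = 0)
    (hf : ContinuousOn f K) (hf0 : ∀ q ∈ K, 0 ≤ f q) :
    ∃ h : ℕ → E → ℝ, (∀ N, ContDiff ℝ 1 (h N)) ∧ (∀ N, ∀ q ∉ K, h N q = 0) ∧
      (∀ N, ∀ q ∈ K, h N q ^ 2 ≤ f q) ∧
      Tendsto (fun N => ∫ q in K, h N q ^ 2 ∂ν) atTop (nhds (∫ q in K, f q ∂ν)) := by
  choose h hh habs hlow using fun N : ℕ => exists_contDiff_abs_le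
    (continuous_sqrtCutoff hK.isClosed hf N) (sqrtCutoff_nonneg N) (Nat.one_div_pos_of_nat (n := N))
  have sq_le (N : ℕ) (q : E) (hq : q ∈ K) : h N q ^ 2 ≤ f q := by
    rw [← sq_abs, ← Real.sq_sqrt (hf0 q hq)]
    exact pow_le_pow_left₀ (abs_nonneg _) ((habs N q).trans (min_le_left _ _)) 2
  refine ⟨h, hh, fun N q hq => ?_, sq_le, ?_⟩
  · rw [← abs_nonpos_iff, ← sqrtCutoff_eq_zero (subset_closure hq) N]
    exact habs N q
  refine tendsto_integral_of_dominated_convergence f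
    (fun N => ((hh N).continuous.pow 2).aestronglyMeasurable) (hf.integrableOn_compact hK)
    (fun N => ?_) ?_
  · filter_upwards [ae_restrict_mem hK.measurableSet] with q hq
    rw [Real.norm_of_nonneg (sq_nonneg _)]
    exact sq_le N q hq
  · filter_upwards [ae_restrict_mem hK.measurableSet,
      ae_restrict_of_ae (measure_eq_zero_iff_ae_notMem.1 hfrontier)] with q hq hqf
    have interior : q ∈ interior K := by
      by_contra hqi
      exact hqf ⟨subset_closure hq, hqi⟩
    have cutoff_tendsto : Tendsto (fun N => sqrtCutoff K f N q) atTop (nhds √(f q)) :=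
      tendsto_const_nhds.congr' ((eventually_sqrtCutoff_eq hKc interior).mono fun _ h => h.symm)
    have tendsto_sqrt : Tendsto (fun N => h N q) atTop (nhds √(f q)) :=
      tendsto_of_tendsto_of_tendsto_of_le_of_le
        (by simpa using cutoff_tendsto.sub tendsto_one_div_add_atTop_nhds_zero_nat)
        cutoff_tendsto (fun N => hlow N q) fun N => (le_abs_self _).trans (habs N q)
    simpa only [Real.sq_sqrt (hf0 q hq)] using tendsto_sqrt.pow 2

end SmoothMinorants

/-! ### The simplex and its coordinates -/

section Simplex

variable {a b m : ℕ}

lemma isCompact_simplex (a : ℕ) : IsCompact (simplex a) :=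
  isCompact_stdSimplex ℝ (Fin a)

lemma isClosed_stdCorner (m : ℕ) : IsClosed (stdCorner m) := by
  simp only [stdCorner, Set.ofPred_and, Set.ofPred_forall]
  exact (isClosed_iInter fun i => isClosed_le continuous_const (continuous_apply i)).inter
    (isClosed_le (by fun_prop) continuous_const)

lemma isCompact_stdCorner (m : ℕ) : IsCompact (stdCorner m) :=
  (isCompact_Icc (a := (0 : Fin m → ℝ)) (b := 1)).of_isClosed_subset (isClosed_stdCorner m)
    fun _ hq => ⟨hq.1, fun i => (single_le_sum (fun j _ => hq.1 j) (mem_univ i)).trans hq.2⟩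

lemma convex_stdCorner (m : ℕ) : Convex ℝ (stdCorner m) := by
  simp only [stdCorner, Set.ofPred_and, Set.ofPred_forall]
  exact (convex_iInter fun i => convex_halfSpace_ge (LinearMap.proj i).isLinear 0).inter
    (convex_halfSpace_le ⟨fun _ _ => sum_add_distrib, fun c q => (mul_sum univ q c).symm⟩ 1)

lemma compl_stdCorner_nonempty (hm : 0 < m) : (stdCorner m)ᶜ.Nonempty :=
  ⟨fun _ => -1, fun h => absurd (h.1 ⟨0, hm⟩) (by norm_num)⟩

lemma sum_emb (ha : 0 < a) (q : Fin (a - 1) → ℝ) : ∑ x, emb a q x = 1 := by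
  obtain ⟨m, rfl⟩ := Nat.exists_eq_add_one.2 ha
  rw [Fin.sum_univ_castSucc]
  simp [emb]

lemma emb_mem_simplex (ha : 0 < a) {q : Fin (a - 1) → ℝ} (hq : q ∈ stdCorner (a - 1)) :
    emb a q ∈ simplex a := by
  refine ⟨fun x => ?_, sum_emb ha q⟩
  simp only [emb]
  split_ifs
  exacts [hq.1 _, sub_nonneg.2 hq.2]

lemma contDiff_emb : ContDiff ℝ 1 (emb a) := by
  refine contDiff_pi.2 fun x => ?_
  simp only [emb]
  split_ifs <;> fun_prop

/-- The coordinates, under the parametrisation `emb a` of the hyperplane `∑ x, p x = 1`, of a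
tangent vector `v` of this hyperplane; they determine `v` because `∑ x, v x = 0`. -/
def dropLast (v : Fin a → ℝ) : Fin (a - 1) → ℝ :=
  fun i => v (i.castLE (Nat.sub_le a 1))

lemma emb_add_smul_dropLast (q : Fin (a - 1) → ℝ) (t : ℝ) {v : Fin a → ℝ} (hv : ∑ x, v x = 0) :
    emb a (q + t • dropLast v) = emb a q + t • v := by
  ext x
  obtain ⟨m, rfl⟩ := Nat.exists_eq_add_one.2 x.pos
  simp only [emb, Pi.add_apply, Pi.smul_apply, smul_eq_mul]
  split_ifs with h
  · rfl
  obtain rfl : x = Fin.last m := Fin.ext (by simp only [Fin.val_last]; omega)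
  rw [Fin.sum_univ_castSucc] at hv
  have sum_dropLast : ∑ i, dropLast v i = -v (Fin.last m) := eq_neg_of_add_eq_zero_left hv
  rw [sum_add_distrib, ← mul_sum, sum_dropLast]
  ring

lemma fderiv_dotProduct_emb (w : Fin a → ℝ) (q : Fin (a - 1) → ℝ) {v : Fin a → ℝ}
    (hv : ∑ x, v x = 0) : fderiv ℝ (fun q => w ⬝ᵥ emb a q) q (dropLast v) = w ⬝ᵥ v := by
  have hd : Differentiable ℝ fun q => w ⬝ᵥ emb a q := by
    have := (contDiff_emb (a := a)).differentiable one_ne_zero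
    unfold dotProduct
    fun_prop
  rw [← (hd q).lineDeriv_eq_fderiv, lineDeriv]
  simp [emb_add_smul_dropLast q _ hv, dotProduct_add, dotProduct_smul]

lemma fderiv_emb_apply (x : Fin a) (q : Fin (a - 1) → ℝ) {v : Fin a → ℝ} (hv : ∑ x, v x = 0) :
    fderiv ℝ (fun q => emb a q x) q (dropLast v) = v x := by
  simpa only [single_one_dotProduct] using fderiv_dotProduct_emb (Pi.single x 1) q hv

end Simplex

/-! ### The Fisher information of a privacy protocol -/

section CenteredBasis

variable {κ : Type*} [Fintype κ] [DecidableEq κ]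

/-- The orthogonal projection of the standard basis vector `e_x` onto `{v | ∑ z, v z = 0}`. -/
def centeredBasis (x : κ) : κ → ℝ :=
  Pi.single x 1 - fun _ => (Fintype.card κ : ℝ)⁻¹

lemma sum_centeredBasis (x : κ) : ∑ z, centeredBasis x z = 0 := by
  have : Nonempty κ := ⟨x⟩
  simp [centeredBasis]

lemma dotProduct_centeredBasis (w : κ → ℝ) (x : κ) :
    w ⬝ᵥ centeredBasis x = w x - (∑ z, w z) / Fintype.card κ := by
  rw [centeredBasis, dotProduct_sub, dotProduct_single_one]
  simp only [dotProduct, ← sum_mul, div_eq_mul_inv]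

end CenteredBasis

section Protocol

variable {a b : ℕ} {Q : Matrix (Fin b) (Fin a) ℝ}

lemma sum_mulVec (hQcol : ∀ x, ∑ y, Q y x = 1) (p : Fin a → ℝ) :
    ∑ y, (Q *ᵥ p) y = ∑ x, p x := by
  simp only [mulVec, dotProduct]
  rw [sum_comm]
  simp only [← sum_mul, hQcol, one_mul]

lemma le_dotProduct_of_mem_simplex {w p : Fin a → ℝ} {c : ℝ} (hw : ∀ x, c ≤ w x)
    (hp : p ∈ simplex a) : c ≤ w ⬝ᵥ p := by
  calc c = ∑ x, c * p x := by rw [← mul_sum, hp.2, mul_one]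
    _ ≤ w ⬝ᵥ p := sum_le_sum fun x _ => mul_le_mul_of_nonneg_right (hw x) (hp.1 x)

lemma mulVec_pos (hQpos : ∀ y x, 0 < Q y x) {p : Fin a → ℝ} (hp : p ∈ simplex a) (y : Fin b) :
    0 < (Q *ᵥ p) y := by
  obtain ⟨x, -, hx⟩ : ∃ x ∈ univ, 0 < p x := by
    by_contra! h
    linarith [sum_nonpos h, hp.2]
  exact sum_pos' (fun z _ => mul_nonneg (hQpos y z).le (hp.1 z))
    ⟨x, mem_univ x, mul_pos (hQpos y x) hx⟩

/-- The probability `(Qp)_y` of the outcome `y`, as a function of the coordinates `q` of `p`. -/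
def outcomeProb (Q : Matrix (Fin b) (Fin a) ℝ) (y : Fin b) (q : Fin (a - 1) → ℝ) : ℝ :=
  (Q *ᵥ emb a q) y

lemma sum_outcomeProb (ha : 0 < a) (hQcol : ∀ x, ∑ y, Q y x = 1) (q : Fin (a - 1) → ℝ) :
    ∑ y, outcomeProb Q y q = 1 :=
  (sum_mulVec hQcol _).trans (sum_emb ha q)

lemma outcomeProb_pos (ha : 0 < a) (hQpos : ∀ y x, 0 < Q y x) (y : Fin b)
    {q : Fin (a - 1) → ℝ} (hq : q ∈ stdCorner (a - 1)) : 0 < outcomeProb Q y q :=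
  mulVec_pos hQpos (emb_mem_simplex ha hq) y

lemma contDiff_outcomeProb (y : Fin b) : ContDiff ℝ 1 (outcomeProb Q y) := by
  have := contDiff_emb (a := a)
  unfold outcomeProb mulVec dotProduct
  fun_prop

/-- The trace of the Fisher information of the model `outcomeProb Q` over the tangent space of the
simplex. -/
def fisherTrace (Q : Matrix (Fin b) (Fin a) ℝ) (q : Fin (a - 1) → ℝ) : ℝ :=
  ∑ x, fisherInfo (outcomeProb Q) q (dropLast (centeredBasis x))

lemma continuousOn_fisherTrace (ha : 0 < a) (hQpos : ∀ y x, 0 < Q y x) :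
    ContinuousOn (fisherTrace Q) (stdCorner (a - 1)) :=
  continuousOn_finsetSum _ fun _ _ => continuousOn_fisherInfo contDiff_outcomeProb
    (fun y _ hq => (outcomeProb_pos ha hQpos y hq).ne') _

lemma fisherTrace_eq (Q : Matrix (Fin b) (Fin a) ℝ) (q : Fin (a - 1) → ℝ) :
    fisherTrace Q q = ∑ y, (∑ x, (Q y x - (∑ z, Q y z) / a) ^ 2) / outcomeProb Q y q := by
  have fderiv_outcomeProb (x : Fin a) (y : Fin b) :
      fderiv ℝ (outcomeProb Q y) q (dropLast (centeredBasis x)) =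
        Q y x - (∑ z, Q y z) / Fintype.card (Fin a) :=
    (fderiv_dotProduct_emb (Q y) q (sum_centeredBasis x)).trans (dotProduct_centeredBasis (Q y) x)
  simp only [fisherTrace, fisherInfo, fderiv_outcomeProb, Fintype.card_fin, sum_div]
  exact sum_comm

lemma sum_sq_sub_mean_div_le {w p : Fin a → ℝ} {m c : ℝ} (hm : 0 < m) (hmw : ∀ x, m ≤ w x)
    (hwc : ∀ x, w x ≤ c * m) (hp : p ∈ simplex a) :
    (∑ x, (w x - (∑ z, w z) / a) ^ 2) / (w ⬝ᵥ p) ≤ a * (c - 1) ^ 2 / 4 * m := by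
  have m_le := le_dotProduct_of_mem_simplex hmw hp
  have deviation := sum_sq_sub_mean_le hmw hwc
  rw [Fintype.card_fin] at deviation
  rw [div_le_iff₀ (hm.trans_le m_le)]
  calc _ ≤ a * (c * m - m) ^ 2 / 4 := deviation
    _ = a * (c - 1) ^ 2 / 4 * m * m := by ring
    _ ≤ _ := by gcongr

lemma fisherTrace_le_of_satisfiesLDP (ha : 0 < a) (hQpos : ∀ y x, 0 < Q y x)
    (hQcol : ∀ x, ∑ y, Q y x = 1) {ε : ℝ} (hLDP : SatisfiesLDP Q ε) {q : Fin (a - 1) → ℝ}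
    (hq : q ∈ stdCorner (a - 1)) : fisherTrace Q q ≤ a * (Real.exp ε - 1) ^ 2 / 4 := by
  have : Nonempty (Fin a) := ⟨⟨0, ha⟩⟩
  choose x₀ hx₀ using fun y => Finite.exists_min (Q y)
  have sum_min_le_one : ∑ y, Q y (x₀ y) ≤ 1 := by
    rw [← hQcol ⟨0, ha⟩]
    exact sum_le_sum fun y _ => hx₀ y _
  calc fisherTrace Q q
      = ∑ y, (∑ x, (Q y x - (∑ z, Q y z) / a) ^ 2) / outcomeProb Q y q := fisherTrace_eq Q q
    _ ≤ ∑ y, a * (Real.exp ε - 1) ^ 2 / 4 * Q y (x₀ y) :=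
        sum_le_sum fun y _ => sum_sq_sub_mean_div_le (hQpos y _) (hx₀ y)
          (fun x => hLDP (x₀ y) x y) (emb_mem_simplex ha hq)
    _ = a * (Real.exp ε - 1) ^ 2 / 4 * ∑ y, Q y (x₀ y) := (mul_sum ..).symm
    _ ≤ a * (Real.exp ε - 1) ^ 2 / 4 := mul_le_of_le_one_right (by positivity) sum_min_le_one

end Protocol

/-! ### Bayes risk -/

section BayesRisk

variable {α : Type*} [MeasurableSpace α] {μ : Measure α}

lemma integrable_of_ae_mem_isCompact [TopologicalSpace α] [OpensMeasurableSpace α] [T2Space α]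
    [IsFiniteMeasureOnCompacts μ] {K : Set α} (hK : IsCompact K) (hμ : ∀ᵐ x ∂μ, x ∈ K)
    {g : α → ℝ} (hg : ContinuousOn g K) : Integrable g μ := by
  have := hg.integrableOn_compact (μ := μ) hK
  rwa [IntegrableOn, Measure.restrict_eq_self_of_ae_mem hμ] at this

lemma integral_pos_of_ae_pos [NeZero μ] {g : α → ℝ} (hg : Integrable g μ)
    (hpos : ∀ᵐ x ∂μ, 0 < g x) : 0 < ∫ x, g x ∂μ := by
  have nonneg : 0 ≤ᵐ[μ] g := hpos.mono fun _ => le_of_lt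
  refine (integral_nonneg_of_ae nonneg).lt_of_ne' fun h => ?_
  obtain ⟨x, hx, hx0⟩ :=
    (hpos.and ((integral_eq_zero_iff_of_nonneg_ae nonneg hg).1 h)).exists
  exact hx.ne' hx0

lemma integral_sq_sub_posteriorMean_mul_le {X L : α → ℝ} (hL : Integrable L μ)
    (hXL : Integrable (fun p => X p * L p) μ) (hX2L : Integrable (fun p => X p ^ 2 * L p) μ)
    (hpos : 0 < ∫ p, L p ∂μ) (t : ℝ) :
    ∫ p, (X p - (∫ p, X p * L p ∂μ) / ∫ p, L p ∂μ) ^ 2 * L p ∂μ ≤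
      ∫ p, (X p - t) ^ 2 * L p ∂μ := by
  have expand (t : ℝ) : ∫ p, (X p - t) ^ 2 * L p ∂μ =
      (∫ p, X p ^ 2 * L p ∂μ) - 2 * t * (∫ p, X p * L p ∂μ) + t ^ 2 * ∫ p, L p ∂μ := by
    have hdiff : Integrable (fun p => X p ^ 2 * L p - 2 * t * (X p * L p)) μ :=
      hX2L.sub (hXL.const_mul _)
    rw [← integral_const_mul, ← integral_const_mul, ← integral_sub hX2L (hXL.const_mul _),
      ← integral_add hdiff (hL.const_mul _)]
    exact integral_congr_ae (Eventually.of_forall fun p => by ring)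
  rw [expand, expand]
  set m := ∫ p, X p * L p ∂μ
  set c := ∫ p, L p ∂μ
  have excess : 0 ≤ c * (t - m / c) ^ 2 := by positivity
  have excess_eq : c * (t - m / c) ^ 2 =
      -(2 * t * m) + t ^ 2 * c - (-(2 * (m / c) * m) + (m / c) ^ 2 * c) := by
    field_simp
    ring
  linarith

end BayesRisk

section DistributionRisk

variable {a b n : ℕ} {Q : Matrix (Fin b) (Fin a) ℝ} {μ : Measure (Fin a → ℝ)}

lemma continuous_mulVec_apply (Q : Matrix (Fin b) (Fin a) ℝ) (y : Fin b) :
    Continuous fun p : Fin a → ℝ => (Q *ᵥ p) y := by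
  unfold mulVec dotProduct
  fun_prop

lemma continuous_lik (Q : Matrix (Fin b) (Fin a) ℝ) (y : Fin n → Fin b) : Continuous (lik Q y) :=
  continuous_finsetProd _ fun i _ => continuous_mulVec_apply Q (y i)

lemma lik_pos (hQpos : ∀ y x, 0 < Q y x) (y : Fin n → Fin b) {p : Fin a → ℝ}
    (hp : p ∈ simplex a) : 0 < lik Q y p :=
  prod_pos fun i _ => mulVec_pos hQpos hp (y i)

lemma integrable_of_ae_mem_simplex [IsFiniteMeasure μ] (hμ : ∀ᵐ p ∂μ, p ∈ simplex a)
    {g : (Fin a → ℝ) → ℝ} (hg : Continuous g) : Integrable g μ :=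
  integrable_of_ae_mem_isCompact (isCompact_simplex a) hμ hg.continuousOn

lemma MSEdistr_eq_sum_integral [IsFiniteMeasure μ] (hμ : ∀ᵐ p ∂μ, p ∈ simplex a)
    (Est : (Fin n → Fin b) → Fin a → ℝ) :
    MSEdistr Q μ Est = ∑ x, ∑ y, ∫ p, (p x - Est y x) ^ 2 * lik Q y p ∂μ := by
  have hL := continuous_lik (n := n) Q
  rw [sum_comm]
  simp only [MSEdistr, sum_mul]
  exact sum_congr rfl fun y _ => integral_finsetSum _ fun x _ =>
    integrable_of_ae_mem_simplex hμ (by fun_prop)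

lemma MSEdistr_PiOpt_le [IsFiniteMeasure μ] [NeZero μ] (hμ : ∀ᵐ p ∂μ, p ∈ simplex a)
    (hQpos : ∀ y x, 0 < Q y x) (Est : (Fin n → Fin b) → Fin a → ℝ) :
    MSEdistr (n := n) Q μ (PiOpt Q μ) ≤ MSEdistr Q μ Est := by
  rw [MSEdistr_eq_sum_integral hμ, MSEdistr_eq_sum_integral hμ]
  refine sum_le_sum fun x _ => sum_le_sum fun y _ => ?_
  have hL := continuous_lik Q y
  exact integral_sq_sub_posteriorMean_mul_le (integrable_of_ae_mem_simplex hμ hL)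
    (integrable_of_ae_mem_simplex hμ (by fun_prop)) (integrable_of_ae_mem_simplex hμ (by fun_prop))
    (integral_pos_of_ae_pos (integrable_of_ae_mem_simplex hμ hL)
      (hμ.mono fun _ => lik_pos hQpos y)) _

lemma exists_mul_eq_one_of_rank_eq_card {K m k : Type*} [Field K] [Fintype m] [Fintype k]
    [DecidableEq k] (M : Matrix m k K) (hM : M.rank = Fintype.card k) :
    ∃ A : Matrix k m K, A * M = 1 := by
  have range_eq_top : LinearMap.range Mᵀ.mulVecLin = ⊤ := by
    refine Submodule.eq_top_of_finrank_eq ?_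
    rw [← rank, rank_transpose, hM, Module.finrank_fintype_fun_eq_card]
  rw [← vecMul_surjective_iff_exists_left_inverse]
  intro v
  obtain ⟨w, hw⟩ := LinearMap.range_eq_top.1 range_eq_top v
  exact ⟨w, by simpa only [mulVecLin_apply, mulVec_transpose] using hw⟩

/-- The estimator that applies the matrix `A` to the empirical distribution of the observations. It
is unbiased when `A * Q = 1`. -/
def linearEstimator (A : Matrix (Fin a) (Fin b) ℝ) (y : Fin n → Fin b) (x : Fin a) : ℝ :=
  (∑ i, A x (y i)) / n

lemma mul_MSEdistr_linearEstimator [IsFiniteMeasure μ] (hμ : ∀ᵐ p ∂μ, p ∈ simplex a)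
    (hQcol : ∀ x, ∑ y, Q y x = 1) {A : Matrix (Fin a) (Fin b) ℝ} (hA : A * Q = 1) (hn : n ≠ 0) :
    n * MSEdistr (n := n) Q μ (linearEstimator A) =
      ∑ x, ∫ p, ∑ y, (Q *ᵥ p) y * (A x y - p x) ^ 2 ∂μ := by
  have hL := continuous_lik (n := n) Q
  rw [MSEdistr_eq_sum_integral hμ, mul_sum]
  refine sum_congr rfl fun x _ => ?_
  rw [← integral_finsetSum _ fun y _ => integrable_of_ae_mem_simplex hμ (by fun_prop),
    ← integral_const_mul]
  refine integral_congr_ae (hμ.mono fun p hp => ?_)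
  have unbiased : ∑ y, (Q *ᵥ p) y * A x y = p x := by
    calc ∑ y, (Q *ᵥ p) y * A x y = (A *ᵥ (Q *ᵥ p)) x := sum_congr rfl fun y _ => mul_comm _ _
      _ = p x := by rw [mulVec_mulVec, hA, one_mulVec]
  have variance := sum_prod_mul_sampleMean_sub_sq ((sum_mulVec hQcol p).trans hp.2) unbiased hn
  simp only [linearEstimator, lik, mul_comm _ (∏ _, _), sub_sq_comm (p x), variance]
  field_simp

lemma isCoboundedUnder_mul_MSEdistr_PiOpt [IsFiniteMeasure μ] [NeZero μ]
    (hμ : ∀ᵐ p ∂μ, p ∈ simplex a) (hQpos : ∀ y x, 0 < Q y x) (hQcol : ∀ x, ∑ y, Q y x = 1)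
    (hrank : Q.rank = a) : IsCoboundedUnder (· ≥ ·) atTop
      fun n : ℕ => (n : ℝ) * MSEdistr (n := n) Q μ (PiOpt Q μ) := by
  obtain ⟨A, hA⟩ := exists_mul_eq_one_of_rank_eq_card Q (hrank.trans (Fintype.card_fin a).symm)
  refine IsBoundedUnder.isCoboundedUnder_ge (isBoundedUnder_of_eventually_le
    (a := ∑ x, ∫ p, ∑ y, (Q *ᵥ p) y * (A x y - p x) ^ 2 ∂μ) ?_)
  filter_upwards [eventually_ne_atTop 0] with n hn
  rw [← mul_MSEdistr_linearEstimator hμ hQcol hA hn]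
  exact mul_le_mul_of_nonneg_left (MSEdistr_PiOpt_le hμ hQpos _) n.cast_nonneg

end DistributionRisk

section ContDensity

variable {a : ℕ} {μ : Measure (Fin a → ℝ)} {f : (Fin (a - 1) → ℝ) → ℝ}

lemma IsContDensity.ae_mem_simplex [IsFiniteMeasure μ] (ha : 0 < a) (hf : IsContDensity μ f) :
    ∀ᵐ p ∂μ, p ∈ simplex a := by
  have hms := (isCompact_simplex a).measurableSet
  have h := hf.2.2.2 ((simplex a)ᶜ.indicator 1) (measurable_one.indicator hms.compl)
    ⟨1, fun p => by by_cases hp : p ∈ simplex a <;> simp [hp]⟩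
  rw [integral_indicator_one hms.compl, setIntegral_eq_zero_of_forall_eq_zero fun q hq => by
    simp [emb_mem_simplex ha hq], measureReal_eq_zero_iff] at h
  exact mem_ae_iff.2 h

lemma IsContDensity.integral_eq [IsFiniteMeasure μ] (ha : 0 < a) (hf : IsContDensity μ f)
    {g : (Fin a → ℝ) → ℝ} (hg : Continuous g) :
    ∫ p, g p ∂μ = ∫ q in stdCorner (a - 1), g (emb a q) * f q := by
  have hms := (isCompact_simplex a).measurableSet
  obtain ⟨C, hC⟩ := (isCompact_simplex a).exists_bound_of_continuousOn hg.continuousOn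
  have bounded (p : Fin a → ℝ) : |(simplex a).indicator g p| ≤ |C| := by
    by_cases hp : p ∈ simplex a
    · simpa [hp] using (hC p hp).trans (le_abs_self C)
    · simp [hp]
  calc ∫ p, g p ∂μ = ∫ p, (simplex a).indicator g p ∂μ :=
        integral_congr_ae ((hf.ae_mem_simplex ha).mono fun p hp =>
          (Set.indicator_of_mem hp g).symm)
    _ = ∫ q in stdCorner (a - 1), (simplex a).indicator g (emb a q) * f q :=
        hf.2.2.2 _ (hg.measurable.indicator hms) ⟨|C|, bounded⟩
    _ = ∫ q in stdCorner (a - 1), g (emb a q) * f q :=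
        setIntegral_congr_fun (isClosed_stdCorner _).measurableSet fun q hq => by
          simp [emb_mem_simplex ha hq]

end ContDensity

/-! ### The van Trees bound for a privacy protocol -/

section VanTreesBound

variable {a b n : ℕ} {Q : Matrix (Fin b) (Fin a) ℝ} {μ : Measure (Fin a → ℝ)}
  {f h : (Fin (a - 1) → ℝ) → ℝ}

/-- The trace, over the tangent space of the simplex, of the Fisher information of the prior with
density `h ^ 2` with respect to Lebesgue measure on `stdCorner (a - 1)`. -/
def priorFisherTrace (a : ℕ) (h : (Fin (a - 1) → ℝ) → ℝ) : ℝ :=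
  ∑ x : Fin a, ∫ q in stdCorner (a - 1), 4 * fderiv ℝ h q (dropLast (centeredBasis x)) ^ 2

lemma priorFisherTrace_nonneg : 0 ≤ priorFisherTrace a h :=
  sum_nonneg fun _ _ => integral_nonneg fun _ => by positivity

lemma sq_mul_setIntegral_sq_le (ha : 0 < a) (hQpos : ∀ y x, 0 < Q y x)
    (hQcol : ∀ x, ∑ y, Q y x = 1) (hh : ContDiff ℝ 1 h) (hz : ∀ q ∉ stdCorner (a - 1), h q = 0)
    (t : (Fin n → Fin b) → ℝ) (x : Fin a) :
    ((1 - 1 / a) * ∫ q in stdCorner (a - 1), h q ^ 2) ^ 2 ≤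
      (∫ q in stdCorner (a - 1), h q ^ 2 * ∑ y, (emb a q x - t y) ^ 2 * lik Q y (emb a q)) *
        ∫ q in stdCorner (a - 1), (4 * fderiv ℝ h q (dropLast (centeredBasis x)) ^ 2 +
          h q ^ 2 * (n * fisherInfo (outcomeProb Q) q (dropLast (centeredBasis x)))) := by
  have van_trees := van_trees_inequality volume (isCompact_stdCorner (a - 1)) hh hz
    (ℓ := fun (y : Fin n → Fin b) q => ∏ i, outcomeProb Q (y i) q)
    (fun y => contDiff_prod fun i _ => contDiff_outcomeProb (y i))
    (fun y q hq => prod_pos fun i _ => outcomeProb_pos ha hQpos (y i) hq)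
    (fun q => sum_prod_eq_one (sum_outcomeProb ha hQcol q) n)
    (contDiff_pi.1 contDiff_emb x) t (dropLast (centeredBasis x))
  have fderiv_target (q : Fin (a - 1) → ℝ) :
      fderiv ℝ (fun q => emb a q x) q (dropLast (centeredBasis x)) = 1 - 1 / a := by
    rw [fderiv_emb_apply x q (sum_centeredBasis x)]
    simp [centeredBasis]
  have information {q} (hq : q ∈ stdCorner (a - 1)) := fisherInfo_prod
    (fun y => (contDiff_outcomeProb (Q := Q) y).differentiable one_ne_zero q)
    (fun y => (outcomeProb_pos ha hQpos y hq).ne') (sum_outcomeProb ha hQcol) n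
    (dropLast (centeredBasis x))
  simp only [fderiv_target, integral_mul_const] at van_trees
  rw [mul_comm (1 - 1 / (a : ℝ))]
  refine van_trees.trans_eq (congrArg _ ?_)
  exact setIntegral_congr_fun (isClosed_stdCorner _).measurableSet fun q hq => by
    simp only [information hq]

lemma IsContDensity.setIntegral_mul_emb_le [IsFiniteMeasure μ] (ha : 0 < a)
    (hf : IsContDensity μ f) {w : (Fin (a - 1) → ℝ) → ℝ} (hw : ContinuousOn w (stdCorner (a - 1)))
    (hwf : ∀ q ∈ stdCorner (a - 1), w q ≤ f q) {g : (Fin a → ℝ) → ℝ} (hg : Continuous g)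
    (hg0 : ∀ p ∈ simplex a, 0 ≤ g p) :
    ∫ q in stdCorner (a - 1), w q * g (emb a q) ≤ ∫ p, g p ∂μ := by
  have hcompact := isCompact_stdCorner (a - 1)
  have hge := (hg.comp (contDiff_emb (a := a)).continuous).continuousOn (s := stdCorner (a - 1))
  rw [hf.integral_eq ha hg]
  refine setIntegral_mono_on ((hw.mul hge).integrableOn_compact hcompact)
    ((hge.mul hf.1).integrableOn_compact hcompact) hcompact.measurableSet fun q hq => ?_
  rw [mul_comm]
  exact mul_le_mul_of_nonneg_left (hwf q hq) (hg0 _ (emb_mem_simplex ha hq))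

lemma sum_setIntegral_sq_error_le_MSEdistr [IsFiniteMeasure μ] (ha : 0 < a)
    (hQpos : ∀ y x, 0 < Q y x) (hf : IsContDensity μ f) (hh : Continuous h)
    (hhf : ∀ q ∈ stdCorner (a - 1), h q ^ 2 ≤ f q) (Est : (Fin n → Fin b) → Fin a → ℝ) :
    ∑ x, ∫ q in stdCorner (a - 1), h q ^ 2 * ∑ y, (emb a q x - Est y x) ^ 2 * lik Q y (emb a q) ≤
      MSEdistr Q μ Est := by
  have hμ := hf.ae_mem_simplex ha
  have hL := continuous_lik (n := n) Q
  rw [MSEdistr_eq_sum_integral hμ]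
  refine sum_le_sum fun x _ => ?_
  rw [← integral_finsetSum _ fun y _ => integrable_of_ae_mem_simplex hμ (by fun_prop)]
  exact hf.setIntegral_mul_emb_le ha (hh.pow 2).continuousOn hhf
    (g := fun p => ∑ y, (p x - Est y x) ^ 2 * lik Q y p) (by fun_prop) fun p hp =>
      sum_nonneg fun y _ => mul_nonneg (sq_nonneg _) (lik_pos hQpos y hp).le

lemma setIntegral_sq_le_one (hf : IsContDensity μ f) (hh : Continuous h)
    (hhf : ∀ q ∈ stdCorner (a - 1), h q ^ 2 ≤ f q) : ∫ q in stdCorner (a - 1), h q ^ 2 ≤ 1 := by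
  have hcompact := isCompact_stdCorner (a - 1)
  rw [← hf.2.2.1]
  exact setIntegral_mono_on ((hh.pow 2).continuousOn.integrableOn_compact hcompact)
    (hf.1.integrableOn_compact hcompact) hcompact.measurableSet hhf

lemma sum_setIntegral_information_le (ha : 0 < a) (hQpos : ∀ y x, 0 < Q y x)
    (hh : ContDiff ℝ 1 h) (hh1 : ∫ q in stdCorner (a - 1), h q ^ 2 ≤ 1) {T : ℝ} (hT : 0 ≤ T)
    (hQT : ∀ q ∈ stdCorner (a - 1), fisherTrace Q q ≤ T) :
    ∑ x, ∫ q in stdCorner (a - 1), (4 * fderiv ℝ h q (dropLast (centeredBasis x)) ^ 2 +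
        h q ^ 2 * (n * fisherInfo (outcomeProb Q) q (dropLast (centeredBasis x)))) ≤
      priorFisherTrace a h + n * T := by
  have hcompact := isCompact_stdCorner (a - 1)
  have hhc := hh.continuous
  have hI (d : Fin (a - 1) → ℝ) :
      ContinuousOn (fun q => fisherInfo (outcomeProb Q) q d) (stdCorner (a - 1)) :=
    continuousOn_fisherInfo contDiff_outcomeProb
      (fun y q hq => (outcomeProb_pos ha hQpos y hq).ne') d
  have hIT := continuousOn_fisherTrace ha hQpos
  have integrable {g : (Fin (a - 1) → ℝ) → ℝ} (hg : ContinuousOn g (stdCorner (a - 1))) :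
      IntegrableOn g (stdCorner (a - 1)) := hg.integrableOn_compact hcompact
  have split_prior (d : Fin (a - 1) → ℝ) : ∫ q in stdCorner (a - 1),
      (4 * fderiv ℝ h q d ^ 2 + h q ^ 2 * (n * fisherInfo (outcomeProb Q) q d)) =
        (∫ q in stdCorner (a - 1), 4 * fderiv ℝ h q d ^ 2) +
          ∫ q in stdCorner (a - 1), h q ^ 2 * (n * fisherInfo (outcomeProb Q) q d) :=
    integral_add (integrable (by fun_prop)) (integrable (by fun_prop))
  simp only [split_prior, sum_add_distrib]
  refine add_le_add le_rfl ?_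
  rw [← integral_finsetSum _ fun x _ => integrable (by fun_prop)]
  calc _ = n * ∫ q in stdCorner (a - 1), h q ^ 2 * fisherTrace Q q := by
        rw [← integral_const_mul]
        simp only [← mul_sum, fisherTrace, mul_left_comm]
    _ ≤ n * ∫ q in stdCorner (a - 1), h q ^ 2 * T := by
        refine mul_le_mul_of_nonneg_left ?_ n.cast_nonneg
        exact setIntegral_mono_on (integrable (by fun_prop)) (integrable (by fun_prop))
          hcompact.measurableSet fun q hq => mul_le_mul_of_nonneg_left (hQT q hq) (sq_nonneg _)
    _ ≤ n * T := by
        rw [integral_mul_const]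
        exact mul_le_mul_of_nonneg_left (mul_le_of_le_one_left hT hh1) n.cast_nonneg

theorem sq_setIntegral_sq_le_MSEdistr_mul [IsFiniteMeasure μ] (ha : 0 < a)
    (hQpos : ∀ y x, 0 < Q y x) (hQcol : ∀ x, ∑ y, Q y x = 1) (hf : IsContDensity μ f)
    (hh : ContDiff ℝ 1 h) (hz : ∀ q ∉ stdCorner (a - 1), h q = 0)
    (hhf : ∀ q ∈ stdCorner (a - 1), h q ^ 2 ≤ f q) {T : ℝ} (hT : 0 ≤ T)
    (hQT : ∀ q ∈ stdCorner (a - 1), fisherTrace Q q ≤ T) (Est : (Fin n → Fin b) → Fin a → ℝ) :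
    ((a - 1) * ∫ q in stdCorner (a - 1), h q ^ 2) ^ 2 ≤
      MSEdistr Q μ Est * (priorFisherTrace a h + n * T) := by
  have hms := (isCompact_stdCorner (a - 1)).measurableSet
  have sum_coordinates : ∑ _x : Fin a, (1 - 1 / a) * ∫ q in stdCorner (a - 1), h q ^ 2 =
      (a - 1) * ∫ q in stdCorner (a - 1), h q ^ 2 := by
    rw [sum_const, card_univ, Fintype.card_fin, nsmul_eq_mul]
    field_simp
  have error_nonneg (x : Fin a) : 0 ≤ ∫ q in stdCorner (a - 1),
      h q ^ 2 * ∑ y, (emb a q x - Est y x) ^ 2 * lik Q y (emb a q) :=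
    setIntegral_nonneg hms fun q hq => mul_nonneg (sq_nonneg _) (sum_nonneg fun y _ =>
      mul_nonneg (sq_nonneg _) (lik_pos hQpos y (emb_mem_simplex ha hq)).le)
  have information_nonneg (x : Fin a) : 0 ≤ ∫ q in stdCorner (a - 1),
      (4 * fderiv ℝ h q (dropLast (centeredBasis x)) ^ 2 +
        h q ^ 2 * (n * fisherInfo (outcomeProb Q) q (dropLast (centeredBasis x)))) :=
    setIntegral_nonneg hms fun q hq => add_nonneg (by positivity) (mul_nonneg (sq_nonneg _)
      (mul_nonneg n.cast_nonneg
        (fisherInfo_nonneg (fun y => (outcomeProb_pos ha hQpos y hq).le) _)))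
  have error_le := sum_setIntegral_sq_error_le_MSEdistr ha hQpos hf hh.continuous hhf Est
  have information_le := sum_setIntegral_information_le (n := n) ha hQpos hh
    (setIntegral_sq_le_one hf hh.continuous hhf) hT hQT
  rw [← sum_coordinates]
  refine (sum_sq_le_sum_mul_sum_of_sq_le_mul univ (fun x _ => error_nonneg x)
    (fun x _ => information_nonneg x) fun x _ =>
      sq_mul_setIntegral_sq_le ha hQpos hQcol hh hz (fun y => Est y x) x).trans ?_
  exact mul_le_mul error_le information_le (sum_nonneg fun x _ => information_nonneg x)
    ((sum_nonneg fun x _ => error_nonneg x).trans error_le)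

end VanTreesBound

/-! ### Asymptotics -/

lemma le_liminf_of_le_liminf_coe {ι : Type*} {l : Filter ι} {u : ι → ℝ}
    (hu : IsCoboundedUnder (· ≥ ·) l u) {x : ℝ}
    (hx : (x : EReal) ≤ liminf (fun i => (u i : EReal)) l) : x ≤ liminf u l := by
  refine le_of_forall_lt_imp_le_of_dense fun y hy => le_liminf_of_le hu ?_
  filter_upwards [eventually_lt_of_lt_liminf ((EReal.coe_lt_coe_iff.2 hy).trans_le hx)] with i hi
  exact (EReal.coe_lt_coe_iff.1 hi).le

lemma div_le_liminf_mul_of_le_mul_add {u : ℕ → ℝ} {s J T : ℝ} (hJ : 0 ≤ J) (hT : 0 < T)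
    (hu : ∀ n : ℕ, s ≤ u n * (J + n * T)) :
    ((s / T : ℝ) : EReal) ≤ liminf (fun n : ℕ => ((n * u n : ℝ) : EReal)) atTop := by
  have lim : Tendsto (fun n : ℕ => s / (J / n + T)) atTop (nhds (s / T)) := by
    have lim_denom : Tendsto (fun n : ℕ => J / n + T) atTop (nhds T) := by
      simpa only [zero_add] using (tendsto_const_div_atTop_nhds_zero_nat J).add_const T
    exact tendsto_const_nhds.div lim_denom hT.ne'
  rw [← (continuous_coe_real_ereal.continuousAt.tendsto.comp lim).liminf_eq]
  refine liminf_le_liminf ?_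
  filter_upwards [eventually_ne_atTop 0] with n hn
  refine EReal.coe_le_coe_iff.2 ((div_le_iff₀ (by positivity)).2 ?_)
  calc s ≤ u n * (J + n * T) := hu n
    _ = n * u n * (J / n + T) := by field_simp

theorem div_le_liminf_mul_MSEdistr {a b : ℕ} (ha : 2 ≤ a) {Q : Matrix (Fin b) (Fin a) ℝ}
    (hQpos : ∀ y x, 0 < Q y x) (hQcol : ∀ x, ∑ y, Q y x = 1) {μ : Measure (Fin a → ℝ)}
    [IsFiniteMeasure μ] {f : (Fin (a - 1) → ℝ) → ℝ} (hf : IsContDensity μ f) {T : ℝ} (hT : 0 < T)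
    (hQT : ∀ q ∈ stdCorner (a - 1), fisherTrace Q q ≤ T)
    (Est : ∀ n, (Fin n → Fin b) → Fin a → ℝ) :
    (((a - 1) ^ 2 / T : ℝ) : EReal) ≤
      liminf (fun n : ℕ => ((n * MSEdistr Q μ (Est n) : ℝ) : EReal)) atTop := by
  obtain ⟨h, hh, hz, hhf, hlim⟩ := exists_contDiff_sq_le_tendsto_integral volume
    (isCompact_stdCorner (a - 1)) (compl_stdCorner_nonempty (by omega))
    ((convex_stdCorner _).addHaar_frontier volume) hf.1 fun q _ => hf.2.1 q
  rw [hf.2.2.1] at hlim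
  have bound_tendsto : Tendsto
      (fun N => ((a - 1 : ℝ) * ∫ q in stdCorner (a - 1), h N q ^ 2) ^ 2 / T) atTop
      (nhds ((a - 1) ^ 2 / T)) := by
    simpa using ((hlim.const_mul (a - 1 : ℝ)).pow 2).div_const T
  refine le_of_tendsto' (continuous_coe_real_ereal.continuousAt.tendsto.comp bound_tendsto)
    fun N => div_le_liminf_mul_of_le_mul_add (priorFisherTrace_nonneg (a := a) (h := h N)) hT
      fun n => ?_
  exact sq_setIntegral_sq_le_MSEdistr_mul (by omega) hQpos hQcol hf (hh N) (hz N) (hhf N) hT.le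
    hQT (Est n)

lemma div_sq_le_of_two_le {a s : ℝ} (ha : 2 ≤ a) : a / s ^ 2 ≤ 4 * (a - 1) ^ 2 / (a * s ^ 2) := by
  rw [← div_div]
  refine div_le_div_of_nonneg_right ((le_div_iff₀ (by linarith)).2 ?_) (sq_nonneg s)
  nlinarith

theorem liminf_MSEdistr_ge_LDP_bound_general {a b : ℕ} (ha : 2 ≤ a)
    (Q : Matrix (Fin b) (Fin a) ℝ) (hQpos : ∀ y x, 0 < Q y x) (hQcol : ∀ x, ∑ y, Q y x = 1)
    (μ : Measure (Fin a → ℝ)) [IsFiniteMeasure μ]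
    (f : (Fin (a - 1) → ℝ) → ℝ) (hf : IsContDensity μ f)
    (ε : ℝ) (hε : 0 < ε) (hLDP : SatisfiesLDP Q ε)
    (Est : ∀ n, (Fin n → Fin b) → Fin a → ℝ) :
    ((4 * (a - 1) ^ 2 / (a * (Real.exp ε - 1) ^ 2) : ℝ) : EReal) ≤
      liminf (fun n : ℕ => ((n * MSEdistr Q μ (Est n) : ℝ) : EReal)) atTop := by
  have exp_sub_one_pos : 0 < Real.exp ε - 1 := sub_pos.2 (Real.one_lt_exp_iff.2 hε)
  convert div_le_liminf_mul_MSEdistr ha hQpos hQcol hf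
    (T := a * (Real.exp ε - 1) ^ 2 / 4) (by positivity)
    (fun q => fisherTrace_le_of_satisfiesLDP (by omega) hQpos hQcol hLDP) Est using 2
  field_simp

/-- asymptotic lower bound `a/(e^ε - 1)²` on `n · MSE^distr`
under `ε`-LDP. -/
theorem liminf_MSEdistr_ge_LDP_bound {a b : ℕ} (ha : 2 ≤ a) (hb : 2 ≤ b)
    (Q : Matrix (Fin b) (Fin a) ℝ)
    (hQpos : ∀ y x, 0 < Q y x) (hQcol : ∀ x, ∑ y, Q y x = 1)
    (μ : Measure (Fin a → ℝ)) [IsProbabilityMeasure μ]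
    (hrank : Q.rank = a)
    (f : (Fin (a - 1) → ℝ) → ℝ) (hf : IsContDensity μ f)
    (hint : Integrable (fun p => Real.log (Dmat Q p).det) μ)
    (ε : ℝ) (hε : 0 < ε) (hLDP : SatisfiesLDP Q ε) :
    (a : ℝ) / (Real.exp ε - 1) ^ 2 ≤
      Filter.liminf (fun n : ℕ => (n : ℝ) * MSEdistr (n := n) Q μ (PiOpt Q μ))
        Filter.atTop := by
  have cobounded := isCoboundedUnder_mul_MSEdistr_PiOpt (hf.ae_mem_simplex (by omega)) hQpos hQcol
    hrank
  exact (div_sq_le_of_two_le (by exact_mod_cast ha)).trans (le_liminf_of_le_liminf_coe cobounded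
    (liminf_MSEdistr_ge_LDP_bound_general ha Q hQpos hQcol μ f hf ε hε hLDP fun _ => PiOpt Q μ))

end
end
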